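/- Let α > 0. For all λ, x ∈ ℝ, the Hartley–Bessel kernel satisfies the uniform bound |J_λ(x, α)| ≤ √2. -/

import Mathlib

open MeasureTheory ENNReal

/-- Normalized Bessel function of the first kind of index `a`:
`B_a(x) = ∑ (-1)^n / (n! (a+1)_n) (x/2)^{2n}`. -/
noncomputable def HBbessel (a : ℝ) (x : ℝ) : ℝ :=
  ∑' n : ℕ, ((-1 : ℝ) ^ n / ((n.factorial : ℝ) * (ascPochhammer ℝ n).eval (a + 1)))
      * (x / 2) ^ (2 * n)

/-- Hartley–Bessel kernel `J_λ(x, a)`. -/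
noncomputable def HBkernel (lam x a : ℝ) : ℝ :=
  HBbessel (a - 1/2) (lam * x) + (lam * x / (2 * a + 1)) * HBbessel (a + 1/2) (lam * x)

/-- Weighted measure `μ_a` with density `|x|^{2a} / (2^{a+1/2} Γ(a+1/2))`. -/
noncomputable def HBmeasure (a : ℝ) : Measure ℝ :=
  (volume : Measure ℝ).withDensity fun x =>
    ENNReal.ofReal (|x| ^ (2 * a) / (2 ^ (a + 1/2) * Real.Gamma (a + 1/2)))

/-- Hartley–Bessel transform `H_a[f](λ) = ∫ J_λ(x,a) f(x) dμ_a(x)`. -/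
noncomputable def HBtransform (a : ℝ) (f : ℝ → ℝ) (lam : ℝ) : ℝ :=
  ∫ x, HBkernel lam x a * f x ∂(HBmeasure a)

/-!
The function `u = B_{α - 1/2}` solves the damped oscillator equation `u'' + (2α / t) u' + u = 0`,
and the kernel is `J_λ(x, α) = u(λx) - u'(λx)`. Damping makes the energy `u² + u'²` nonincreasing
on `[0, ∞)`; it is even and equals `1` at `0`, so `J² ≤ 2 (u² + u'²) ≤ 2`. The oscillator equation
comes from two identities for the series `₀F₁`: `d/dz ₀F₁(; s; z) = ₀F₁(; s + 1; z) / s` and the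
three-term recurrence in `s`.
-/

section PowerSeries

variable {𝕜 : Type*} [NontriviallyNormedField 𝕜] [CompleteSpace 𝕜]

theorem hasDerivAt_ofScalarsSum {c : ℕ → 𝕜} {z : 𝕜}
    (hz : ‖z‖ₑ < (FormalMultilinearSeries.ofScalars 𝕜 c).radius) :
    HasDerivAt (FormalMultilinearSeries.ofScalarsSum c)
      (FormalMultilinearSeries.ofScalarsSum (fun n => (n + 1) * c (n + 1)) z) z := by
  set p := FormalMultilinearSeries.ofScalars 𝕜 c
  have hsum : Summable fun n => p.derivSeries n fun _ => z :=
    p.derivSeries.summable (by simpa using hz.trans_le p.radius_le_radius_derivSeries)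
  refine (FormalMultilinearSeries.hasFDerivAt_sum hz).hasDerivAt.congr_deriv ?_
  calc p.derivSeries.sum z 1
      = ∑' n, (p.derivSeries n fun _ => z) 1 :=
        (ContinuousLinearMap.apply 𝕜 𝕜 (1 : 𝕜)).map_tsum hsum
    _ = ∑' n, ((n + 1) * c (n + 1)) • z ^ n := tsum_congr fun n => by simp [p, mul_comm]
    _ = _ := (FormalMultilinearSeries.ofScalars_sum_eq _ z).symm

end PowerSeries

section HypergeometricZeroOne

open Bornology Filter Topology

variable {𝕜 : Type*} [RCLike 𝕜]

/-- The `n`-th Taylor coefficient `1 / (n! (s)_n)` of the hypergeometric function `₀F₁(; s; z)`. -/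
noncomputable def zeroFOneCoeff (s : 𝕜) (n : ℕ) : 𝕜 :=
  ((n.factorial : 𝕜) * (ascPochhammer 𝕜 n).eval s)⁻¹

/-- The confluent hypergeometric limit function `₀F₁(; s; z) = ∑ zⁿ / (n! (s)_n)`, which makes the
normalized Bessel function a composite `B_a(x) = ₀F₁(; a + 1; -(x / 2)²)`. -/
noncomputable def zeroFOne (s z : 𝕜) : 𝕜 :=
  FormalMultilinearSeries.ofScalarsSum (zeroFOneCoeff s) z

theorem zeroFOneCoeff_zero (s : 𝕜) : zeroFOneCoeff s 0 = 1 := by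
  simp [zeroFOneCoeff]

theorem zeroFOneCoeff_ne_zero {s : 𝕜} (hs : ∀ k : ℕ, (k : 𝕜) ≠ -s) (n : ℕ) :
    zeroFOneCoeff s n ≠ 0 := by
  simp [zeroFOneCoeff, n.factorial_ne_zero, hs]

theorem zeroFOneCoeff_succ (s : 𝕜) (n : ℕ) :
    zeroFOneCoeff s (n + 1) = zeroFOneCoeff s n * (((n : 𝕜) + 1)⁻¹ * (s + n)⁻¹) := by
  simp only [zeroFOneCoeff, Nat.factorial_succ, ascPochhammer_succ_eval, Nat.cast_mul,
    Nat.cast_succ, mul_inv]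
  ring

theorem succ_mul_zeroFOneCoeff_succ (s : 𝕜) (n : ℕ) :
    (n + 1) * zeroFOneCoeff s (n + 1) = s⁻¹ * zeroFOneCoeff (s + 1) n := by
  have hn : (n + 1 : 𝕜) ≠ 0 := n.cast_add_one_ne_zero
  have hpoch : (ascPochhammer 𝕜 (n + 1)).eval s = s * (ascPochhammer 𝕜 n).eval (s + 1) := by
    simp [ascPochhammer_succ_left, Polynomial.eval_comp]
  simp only [zeroFOneCoeff, Nat.factorial_succ, hpoch, Nat.cast_mul, Nat.cast_succ, mul_inv]
  field_simp

theorem zeroFOneCoeff_sub_zeroFOneCoeff_add_one {s : 𝕜} (hs : ∀ k : ℕ, (k : 𝕜) ≠ -s) (n : ℕ) :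
    zeroFOneCoeff s n - zeroFOneCoeff (s + 1) n = s⁻¹ * (n * zeroFOneCoeff (s + 1) n) := by
  have hn : (n + 1 : 𝕜) ≠ 0 := n.cast_add_one_ne_zero
  have hs₀ : s ≠ 0 := fun h => hs 0 (by simp [h])
  have hsn : s + n ≠ 0 := fun h => hs n (by linear_combination h)
  have hratio := succ_mul_zeroFOneCoeff_succ s n
  rw [zeroFOneCoeff_succ] at hratio
  field_simp at hratio ⊢
  linear_combination hratio

theorem radius_ofScalars_zeroFOneCoeff {s : 𝕜} (hs : ∀ k : ℕ, (k : 𝕜) ≠ -s) :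
    (FormalMultilinearSeries.ofScalars 𝕜 (zeroFOneCoeff s)).radius = ⊤ := by
  refine FormalMultilinearSeries.ofScalars_radius_eq_top_of_tendsto 𝕜 _
    (.of_forall (zeroFOneCoeff_ne_zero hs)) ?_
  have hnat : Tendsto (fun n : ℕ => (n : 𝕜)) atTop (cobounded 𝕜) := tendsto_natCast_atTop_cobounded
  have hratio : Tendsto (fun n : ℕ => ((n : 𝕜) + 1)⁻¹ * (s + n)⁻¹) atTop (𝓝 0) := by
    simpa using (tendsto_inv₀_cobounded.comp ((tendsto_add_const_cobounded 1).comp hnat)).mul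
      (tendsto_inv₀_cobounded.comp ((tendsto_const_add_cobounded s).comp hnat))
  rw [← norm_zero (E := 𝕜)]
  refine hratio.norm.congr fun n => ?_
  rw [← norm_div, zeroFOneCoeff_succ, mul_div_cancel_left₀ _ (zeroFOneCoeff_ne_zero hs n)]

theorem hasSum_zeroFOne {s : 𝕜} (hs : ∀ k : ℕ, (k : 𝕜) ≠ -s) (z : 𝕜) :
    HasSum (fun n => zeroFOneCoeff s n * z ^ n) (zeroFOne s z) := by
  have hz : z ∈ Metric.eball 0 (FormalMultilinearSeries.ofScalars 𝕜 (zeroFOneCoeff s)).radius := by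
    simp [radius_ofScalars_zeroFOneCoeff hs]
  simpa only [FormalMultilinearSeries.ofScalars_apply_eq, smul_eq_mul] using!
    FormalMultilinearSeries.hasSum _ hz

theorem zeroFOne_zero (s : 𝕜) : zeroFOne s 0 = 1 := by
  simp [zeroFOne, zeroFOneCoeff_zero]

theorem hasDerivAt_zeroFOne {s : 𝕜} (hs : ∀ k : ℕ, (k : 𝕜) ≠ -s) (z : 𝕜) :
    HasDerivAt (zeroFOne s) (s⁻¹ * zeroFOne (s + 1) z) z := by
  refine (hasDerivAt_ofScalarsSum (by simp [radius_ofScalars_zeroFOneCoeff hs])).congr_deriv ?_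
  simp only [succ_mul_zeroFOneCoeff_succ, zeroFOne, FormalMultilinearSeries.ofScalars_sum_eq,
    smul_eq_mul, mul_assoc, tsum_mul_left]

theorem zeroFOne_sub_zeroFOne_add_one {s : 𝕜} (hs : ∀ k : ℕ, (k : 𝕜) ≠ -s) (z : 𝕜) :
    zeroFOne s z - zeroFOne (s + 1) z = s⁻¹ * (s + 1)⁻¹ * z * zeroFOne (s + 1 + 1) z := by
  have hshift {t : 𝕜} (ht : ∀ k : ℕ, (k : 𝕜) ≠ -t) (k : ℕ) : (k : 𝕜) ≠ -(t + 1) :=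
    fun hk => ht (k + 1) (by push_cast; linear_combination hk)
  have hcoeff (n : ℕ) : zeroFOneCoeff s (n + 1) - zeroFOneCoeff (s + 1) (n + 1) =
      s⁻¹ * (s + 1)⁻¹ * zeroFOneCoeff (s + 1 + 1) n := by
    rw [zeroFOneCoeff_sub_zeroFOneCoeff_add_one hs, Nat.cast_succ, succ_mul_zeroFOneCoeff_succ,
      mul_assoc]
  refine ((hasSum_zeroFOne hs z).sub (hasSum_zeroFOne (hshift hs) z)).unique ?_
  rw [← hasSum_nat_add_iff' 1]
  convert! (hasSum_zeroFOne (hshift (hshift hs)) z).mul_left (s⁻¹ * (s + 1)⁻¹ * z) using 1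
  · ext n
    linear_combination z ^ (n + 1) * hcoeff n
  · simp [zeroFOneCoeff_zero]

end HypergeometricZeroOne

section Calculus

theorem antitoneOn_sq_add_sq_of_damped {D : Set ℝ} (hD : Convex ℝ D) {u v c : ℝ → ℝ}
    (hu : ContinuousOn u D) (hv : ContinuousOn v D)
    (hu' : ∀ x ∈ interior D, HasDerivAt u (v x) x)
    (hv' : ∀ x ∈ interior D, HasDerivAt v (-u x - c x * v x) x)
    (hc : ∀ x ∈ interior D, 0 ≤ c x) :
    AntitoneOn (fun x => u x ^ 2 + v x ^ 2) D := by
  have henergy : ∀ x ∈ interior D,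
      HasDerivAt (fun x => u x ^ 2 + v x ^ 2) (-(2 * c x * v x ^ 2)) x := fun x hx =>
    (((hu' x hx).pow 2).add ((hv' x hx).pow 2)).congr_deriv (by ring)
  refine antitoneOn_of_hasDerivWithinAt_nonpos hD ((hu.pow 2).add (hv.pow 2))
    (fun x hx => (henergy x hx).hasDerivWithinAt) fun x hx => ?_
  have := hc x hx
  rw [neg_nonpos]
  positivity

theorem odd_deriv_of_even {𝕜 F : Type*} [NontriviallyNormedField 𝕜] [NormedAddCommGroup F]
    [NormedSpace 𝕜 F] {f : 𝕜 → F} (hf : Function.Even f) : Function.Odd (deriv f) := fun x => by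
  rw [eq_neg_iff_add_eq_zero, ← neg_eq_iff_add_eq_zero, ← deriv_comp_neg, funext hf]

end Calculus

section Bessel

variable {a : ℝ}

theorem HBbessel_eq_zeroFOne (a x : ℝ) : HBbessel a x = zeroFOne (a + 1) (-(x / 2) ^ 2) := by
  rw [HBbessel, zeroFOne, FormalMultilinearSeries.ofScalars_sum_eq]
  refine tsum_congr fun n => ?_
  rw [zeroFOneCoeff, smul_eq_mul, neg_pow ((x / 2) ^ 2), pow_mul]
  ring

theorem HBbessel_zero (a : ℝ) : HBbessel a 0 = 1 := by
  simp [HBbessel_eq_zeroFOne, zeroFOne_zero]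

theorem HBbessel_even (a : ℝ) : Function.Even (HBbessel a) := fun x => by
  simp only [HBbessel_eq_zeroFOne, neg_div, neg_sq]

theorem natCast_ne_neg_of_pos {s : ℝ} (hs : 0 < s) (k : ℕ) : (k : ℝ) ≠ -s :=
  ((neg_lt_zero.2 hs).trans_le k.cast_nonneg).ne'

theorem HBbessel_sub_HBbessel_add_one (ha : -1 < a) (x : ℝ) :
    HBbessel a x - HBbessel (a + 1) x =
      -(x ^ 2 / (4 * (a + 1) * (a + 1 + 1))) * HBbessel (a + 1 + 1) x := by
  have ha₁ : 0 < a + 1 := by linarith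
  simp only [HBbessel_eq_zeroFOne, zeroFOne_sub_zeroFOne_add_one (natCast_ne_neg_of_pos ha₁)]
  field_simp
  ring

theorem hasDerivAt_HBbessel (ha : -1 < a) (x : ℝ) :
    HasDerivAt (HBbessel a) (-(x / (2 * (a + 1))) * HBbessel (a + 1) x) x := by
  have ha₁ : 0 < a + 1 := by linarith
  have hz : HasDerivAt (fun x : ℝ => -(x / 2) ^ 2) (-(x / 2)) x :=
    (((hasDerivAt_id' x).div_const 2).pow 2).neg.congr_deriv (by ring)
  rw [funext (HBbessel_eq_zeroFOne a), HBbessel_eq_zeroFOne]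
  refine ((hasDerivAt_zeroFOne (natCast_ne_neg_of_pos ha₁) _).comp x hz).congr_deriv ?_
  field_simp

theorem deriv_HBbessel (ha : -1 < a) :
    deriv (HBbessel a) = fun x => -(x / (2 * (a + 1))) * HBbessel (a + 1) x :=
  funext fun x => (hasDerivAt_HBbessel ha x).deriv

theorem continuous_HBbessel (ha : -1 < a) : Continuous (HBbessel a) :=
  continuous_iff_continuousAt.2 fun x => (hasDerivAt_HBbessel ha x).continuousAt

theorem continuous_deriv_HBbessel (ha : -1 < a) : Continuous (deriv (HBbessel a)) := by
  have := continuous_HBbessel (show -1 < a + 1 by linarith)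
  rw [deriv_HBbessel ha]
  fun_prop

theorem hasDerivAt_deriv_HBbessel (ha : -1 < a) {x : ℝ} (hx : x ≠ 0) :
    HasDerivAt (deriv (HBbessel a))
      (-HBbessel a x - (2 * a + 1) / x * deriv (HBbessel a) x) x := by
  have ha₁ : 0 < a + 1 := by linarith
  have hrec := HBbessel_sub_HBbessel_add_one ha x
  rw [deriv_HBbessel ha]
  refine (((hasDerivAt_id' x).div_const (2 * (a + 1))).fun_neg.mul
    (hasDerivAt_HBbessel (show -1 < a + 1 by linarith) x)).congr_deriv ?_
  field_simp at hrec ⊢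
  linear_combination hrec

theorem antitoneOn_HBbessel_sq_add_deriv_sq (ha : -1 / 2 ≤ a) :
    AntitoneOn (fun x => HBbessel a x ^ 2 + deriv (HBbessel a) x ^ 2) (Set.Ici 0) := by
  have ha₁ : -1 < a := by linarith
  refine antitoneOn_sq_add_sq_of_damped (c := fun x => (2 * a + 1) / x) (convex_Ici 0)
    (continuous_HBbessel ha₁).continuousOn (continuous_deriv_HBbessel ha₁).continuousOn ?_ ?_ ?_
    <;> simp only [interior_Ici, Set.mem_Ioi] <;> intro x hx
  · exact (hasDerivAt_HBbessel ha₁ x).differentiableAt.hasDerivAt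
  · exact hasDerivAt_deriv_HBbessel ha₁ hx.ne'
  · exact div_nonneg (by linarith) hx.le

theorem HBbessel_sq_add_deriv_sq_le_one (ha : -1 / 2 ≤ a) (x : ℝ) :
    HBbessel a x ^ 2 + deriv (HBbessel a) x ^ 2 ≤ 1 := by
  have heven := HBbessel_even a
  calc HBbessel a x ^ 2 + deriv (HBbessel a) x ^ 2
      = HBbessel a |x| ^ 2 + deriv (HBbessel a) |x| ^ 2 := by
        rcases abs_choice x with h | h
        · rw [h]
        · rw [h, heven x, odd_deriv_of_even heven x, neg_sq]
    _ ≤ HBbessel a 0 ^ 2 + deriv (HBbessel a) 0 ^ 2 :=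
        antitoneOn_HBbessel_sq_add_deriv_sq ha Set.self_mem_Ici (abs_nonneg x) (abs_nonneg x)
    _ = 1 := by simp [HBbessel_zero, deriv_HBbessel (show -1 < a by linarith)]

theorem HBkernel_eq_sub_deriv (ha : -1 / 2 < a) (lam x : ℝ) :
    HBkernel lam x a =
      HBbessel (a - 1 / 2) (lam * x) - deriv (HBbessel (a - 1 / 2)) (lam * x) := by
  rw [HBkernel, deriv_HBbessel (by linarith), show a - 1 / 2 + 1 = a + 1 / 2 by ring,
    show 2 * (a + 1 / 2) = 2 * a + 1 by ring]
  ring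

end Bessel

/-- At `a = 0` the kernel is `cos (λx) + sin (λx)`, which attains the bound. -/
theorem hartleyBessel_kernel_bound_general (a : ℝ) (ha : 0 ≤ a) (lam x : ℝ) :
    |HBkernel lam x a| ≤ Real.sqrt 2 := by
  set u := HBbessel (a - 1 / 2)
  have henergy : u (lam * x) ^ 2 + deriv u (lam * x) ^ 2 ≤ 1 :=
    HBbessel_sq_add_deriv_sq_le_one (by linarith) (lam * x)
  refine Real.abs_le_sqrt ?_
  calc HBkernel lam x a ^ 2
      = (u (lam * x) + -deriv u (lam * x)) ^ 2 := by
        rw [HBkernel_eq_sub_deriv (by linarith), sub_eq_add_neg]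
    _ ≤ 2 * (u (lam * x) ^ 2 + (-deriv u (lam * x)) ^ 2) := add_sq_le
    _ ≤ 2 := by rw [neg_sq]; linarith

/-- For `α > 0`, the Hartley–Bessel kernel satisfies `|J_λ(x, α)| ≤ √2` for all `λ, x ∈ ℝ`. -/
theorem hartleyBessel_kernel_bound (a : ℝ) (ha : 0 < a) (lam x : ℝ) :
    |HBkernel lam x a| ≤ Real.sqrt 2 :=
  hartleyBessel_kernel_bound_general a ha.le lam x
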